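/- Let F be the free group on two generators a, b. If u, v ∈ F generate F, then the commutator [u,v] is conjugate in F to [a,b] or to [a,b]⁻¹. -/

import Mathlib

/-!
Nielsen reduction, with the amount of cancellation in a product `x⁻¹ * y` measured by the Gromov
product of `x` and `y`, which satisfies the ultrametric inequality of a tree.

Take a pair of smallest total length among those reachable from `(u, v)` by elementary moves and
simultaneous conjugations. No letter of a reduced word in this pair is completely cancelled by its
two neighbours: the only obstruction that the elementary moves leave is a letter whose two halves
cancel into a common neighbour, and conjugating by one half shortens such a pair. Hence a reduced
word with `n` letters has length at least `n` after substitution, so if the pair generates, then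
the free generators are among its letters. The moves change the commutator only by conjugation and
inversion.
-/

namespace Nielsen

open FreeGroup hiding norm norm_one norm_mul_le norm_eq_zero map_inv map_mul
open Relation
open scoped commutatorElement

section GromovProduct

variable {α : Type*}

theorem isReduced_invRev {L : List (α × Bool)} (hL : IsReduced L) : IsReduced (invRev L) := by
  classical
  rw [isReduced_iff_reduce_eq, reduce_invRev, hL.reduce_eq]

theorem exists_eq_append_and_isReduced_invRev_append {X Y : List (α × Bool)}
    (hX : IsReduced X) (hY : IsReduced Y) :
    ∃ p s t, X = p ++ s ∧ Y = p ++ t ∧ IsReduced (invRev s ++ t) := by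
  induction X generalizing Y with
  | nil => exact ⟨[], [], Y, rfl, rfl, by simpa using hY⟩
  | cons x X ih =>
    cases Y with
    | nil => exact ⟨[], x :: X, [], rfl, rfl, by simpa using isReduced_invRev hX⟩
    | cons y Y =>
      by_cases hxy : x = y
      · obtain ⟨p, s, t, rfl, rfl, hst⟩ := ih hX.tail hY.tail
        exact ⟨x :: p, s, t, rfl, by rw [hxy, List.cons_append], hst⟩
      · have hinv : invRev (x :: X) = invRev X ++ [(x.1, !x.2)] := by simp [invRev]
        refine ⟨[], x :: X, y :: Y, rfl, rfl, ?_⟩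
        rw [hinv]
        refine (hinv ▸ isReduced_invRev hX).append_overlap ?_ (List.cons_ne_nil _ _)
        rw [List.singleton_append, isReduced_cons_cons]
        refine ⟨fun hfst ↦ ?_, hY⟩
        have hsnd : x.2 ≠ y.2 := fun hsnd ↦ hxy (Prod.ext hfst hsnd)
        simpa [Bool.eq_not] using hsnd

variable [DecidableEq α]

theorem norm_mk_of_isReduced {L : List (α × Bool)} (hL : IsReduced L) :
    (mk L).norm = L.length := by
  rw [FreeGroup.norm, toWord_mk, hL.reduce_eq]

theorem exists_mul_eq_and_norm_eq {x : FreeGroup α} {k : ℕ} (hk : k ≤ x.norm) :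
    ∃ y z, y * z = x ∧ y.norm = k ∧ y.norm + z.norm = x.norm := by
  have hred := isReduced_toWord (x := x)
  have htake := norm_mk_of_isReduced (hred.infix (List.take_prefix k _).isInfix)
  have hdrop := norm_mk_of_isReduced (hred.infix (List.drop_suffix k _).isInfix)
  rw [List.length_take_of_le hk] at htake
  rw [List.length_drop] at hdrop
  refine ⟨mk (x.toWord.take k), mk (x.toWord.drop k), ?_, htake, ?_⟩
  · rw [mul_mk, List.take_append_drop, mk_toWord]
  · rw [htake, hdrop]
    exact Nat.add_sub_cancel' hk

theorem norm_pow_strictMono {x : FreeGroup α} (hx : x ≠ 1) :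
    StrictMono fun n : ℕ ↦ (x ^ n).norm := by
  have hconj := reduceCyclically.conj_conjugator_reduceCyclically x.toWord
  have hcore : 0 < (reduceCyclically x.toWord).length := by
    refine List.length_pos_of_ne_nil fun hnil ↦ hx ?_
    rw [← mk_toWord (x := x), ← hconj, hnil, List.append_nil, ← mul_mk, ← inv_mk, mul_inv_cancel]
  refine strictMono_nat_of_lt_succ fun n ↦ ?_
  simp only [FreeGroup.norm, toWord_pow, reduceCyclically.reduce_flatten_replicate isReduced_toWord]
  rcases n with - | n
  · simp [hcore]
  · simp [add_mul, hcore]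

theorem exists_toWord_eq_append (x y : FreeGroup α) :
    ∃ p s t, x.toWord = p ++ s ∧ y.toWord = p ++ t ∧
      (x⁻¹ * y).norm = s.length + t.length := by
  obtain ⟨p, s, t, hx, hy, hst⟩ :=
    exists_eq_append_and_isReduced_invRev_append (isReduced_toWord (x := x))
      (isReduced_toWord (x := y))
  have hxy : x⁻¹ * y = mk (invRev s ++ t) := by
    rw [← mk_toWord (x := x), ← mk_toWord (x := y), hx, hy]
    simp only [← mul_mk, ← inv_mk]
    group
  exact ⟨p, s, t, hx, hy, by
    rw [hxy, norm_mk_of_isReduced hst, List.length_append, invRev_length]⟩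

/-- The Gromov product of `x` and `y` based at `1`: the length of the longest common prefix of
their reduced words. The subtraction does not truncate and the division is exact, by
`norm_inv_mul_add_two_mul_gromovProduct`. -/
def gromovProduct (x y : FreeGroup α) : ℕ :=
  (x.norm + y.norm - (x⁻¹ * y).norm) / 2

theorem norm_inv_mul_add_two_mul_gromovProduct (x y : FreeGroup α) :
    (x⁻¹ * y).norm + 2 * gromovProduct x y = x.norm + y.norm := by
  obtain ⟨p, s, t, hx, hy, hxy⟩ := exists_toWord_eq_append x y
  rw [gromovProduct, hxy]
  simp only [FreeGroup.norm, hx, hy, List.length_append]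
  lia

theorem norm_mul_add_two_mul_gromovProduct (x y : FreeGroup α) :
    (x * y).norm + 2 * gromovProduct x⁻¹ y = x.norm + y.norm := by
  simpa only [inv_inv, norm_inv_eq] using norm_inv_mul_add_two_mul_gromovProduct x⁻¹ y

theorem le_gromovProduct_iff {x y : FreeGroup α} {k : ℕ} :
    k ≤ gromovProduct x y ↔
      k ≤ x.norm ∧ k ≤ y.norm ∧ x.toWord.take k = y.toWord.take k := by
  have hgp := norm_inv_mul_add_two_mul_gromovProduct x y
  constructor
  · intro hk
    obtain ⟨p, s, t, hx, hy, hxy⟩ := exists_toWord_eq_append x y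
    rw [hxy] at hgp
    simp only [FreeGroup.norm, hx, hy, List.length_append] at hgp ⊢
    have hkp : k ≤ p.length := by lia
    refine ⟨by lia, by lia, ?_⟩
    rw [List.take_append_of_le_length hkp, List.take_append_of_le_length hkp]
  · rintro ⟨hkx, hky, htake⟩
    have hxy : x⁻¹ * y = (mk (x.toWord.drop k))⁻¹ * mk (y.toWord.drop k) := by
      have hsplit (z : FreeGroup α) : z = mk (z.toWord.take k) * mk (z.toWord.drop k) := by
        rw [mul_mk, List.take_append_drop, mk_toWord]
      nth_rw 1 [hsplit x, hsplit y, htake]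
      group
    have hle : (x⁻¹ * y).norm ≤ (x.norm - k) + (y.norm - k) := by
      rw [hxy]
      refine (FreeGroup.norm_mul_le _ _).trans (add_le_add ?_ ?_)
      · rw [norm_inv_eq]
        exact norm_mk_le.trans_eq List.length_drop
      · exact norm_mk_le.trans_eq List.length_drop
    lia

theorem gromovProduct_comm (x y : FreeGroup α) : gromovProduct x y = gromovProduct y x := by
  have hnorm : (x⁻¹ * y).norm = (y⁻¹ * x).norm := by
    rw [← norm_inv_eq, mul_inv_rev, inv_inv]
  rw [gromovProduct, gromovProduct, hnorm, add_comm]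

theorem gromovProduct_self (x : FreeGroup α) : gromovProduct x x = x.norm := by
  have := norm_inv_mul_add_two_mul_gromovProduct x x
  rw [inv_mul_cancel, FreeGroup.norm_one] at this
  lia

theorem gromovProduct_le_right (x y : FreeGroup α) : gromovProduct x y ≤ y.norm :=
  (le_gromovProduct_iff.1 le_rfl).2.1

theorem min_gromovProduct_le (x y z : FreeGroup α) :
    min (gromovProduct x y) (gromovProduct y z) ≤ gromovProduct x z := by
  obtain ⟨hx, -, hxy⟩ := le_gromovProduct_iff.1 (min_le_left (gromovProduct x y) _)
  obtain ⟨-, hz, hyz⟩ := le_gromovProduct_iff.1 (min_le_right _ (gromovProduct y z))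
  exact le_gromovProduct_iff.2 ⟨hx, hz, hxy.trans hyz⟩

theorem gromovProduct_mul_right_eq_norm {x y : FreeGroup α}
    (hxy : (x * y).norm = x.norm + y.norm) : gromovProduct x (x * y) = x.norm := by
  have := norm_inv_mul_add_two_mul_gromovProduct x (x * y)
  rw [inv_mul_cancel_left] at this
  lia

theorem gromovProduct_mul_right_add (x y : FreeGroup α) :
    gromovProduct x (x * y) + gromovProduct x⁻¹ y = x.norm := by
  have hx := norm_inv_mul_add_two_mul_gromovProduct x (x * y)
  have hxy := norm_mul_add_two_mul_gromovProduct x y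
  rw [inv_mul_cancel_left] at hx
  lia

theorem two_mul_gromovProduct_inv_self_lt {x : FreeGroup α} (hx : x ≠ 1) :
    2 * gromovProduct x⁻¹ x < x.norm := by
  have hlt : x.norm < (x * x).norm := by
    simpa [pow_two] using norm_pow_strictMono hx one_lt_two
  have := norm_mul_add_two_mul_gromovProduct x x
  lia

/- The first two hypotheses say that `x` ends with `y⁻¹` and begins with `z⁻¹`. -/
theorem norm_mul_mul_add_norm_add_norm_le {x y z : FreeGroup α}
    (hy : y.norm ≤ gromovProduct y x⁻¹) (hz : z.norm ≤ gromovProduct z⁻¹ x)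
    (hyz : y.norm + z.norm ≤ x.norm) : (z * x * y).norm + y.norm + z.norm ≤ x.norm := by
  rw [gromovProduct_comm] at hz
  have hzx : (x⁻¹ * z⁻¹).norm + 2 * gromovProduct x z⁻¹ = x.norm + z.norm := by
    simpa only [inv_inv, norm_inv_eq] using norm_mul_add_two_mul_gromovProduct x⁻¹ z⁻¹
  have hy' : y.norm ≤ gromovProduct y (x⁻¹ * z⁻¹) := by
    have hx : gromovProduct x⁻¹ (x⁻¹ * z⁻¹) + gromovProduct x z⁻¹ = x.norm := by
      simpa only [inv_inv, norm_inv_eq] using gromovProduct_mul_right_add x⁻¹ z⁻¹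
    have hle : gromovProduct x z⁻¹ ≤ z.norm := by
      simpa only [norm_inv_eq] using gromovProduct_le_right x z⁻¹
    have := min_gromovProduct_le y x⁻¹ (x⁻¹ * z⁻¹)
    lia
  have hzxy : (z * x * y).norm + 2 * gromovProduct y (x⁻¹ * z⁻¹) =
      y.norm + (x⁻¹ * z⁻¹).norm := by
    rw [← norm_inv_mul_add_two_mul_gromovProduct, ← norm_inv_eq (x := z * x * y)]
    simp only [mul_inv_rev]
  lia

/- Write `y = m * n` with two halves of length `k`. Then `x` begins with `n⁻¹` and ends with `m⁻¹`,
so conjugation by `n` turns `x * y` into `n * x * m`, where both ends of `x` cancel, and `y` into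
`n * m`. -/
theorem exists_norm_conj_mul_add_norm_conj_le {x y : FreeGroup α} {k : ℕ} (hy : y.norm = 2 * k)
    (hxy : k ≤ gromovProduct x⁻¹ y) (hyx : k ≤ gromovProduct y⁻¹ x) (hx : 2 * k ≤ x.norm) :
    ∃ g, (g * (x * y) * g⁻¹).norm + (g * y * g⁻¹).norm ≤ x.norm := by
  obtain ⟨m, n, rfl, hm, hmn⟩ := exists_mul_eq_and_norm_eq (show k ≤ y.norm by lia)
  have hm_prefix : m.norm ≤ gromovProduct m x⁻¹ := by
    have hmy : gromovProduct m (m * n) = m.norm := gromovProduct_mul_right_eq_norm hmn.symm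
    have := min_gromovProduct_le m (m * n) x⁻¹
    rw [gromovProduct_comm (m * n)] at this
    lia
  have hn_prefix : n.norm ≤ gromovProduct n⁻¹ x := by
    have hny : gromovProduct n⁻¹ (m * n)⁻¹ = n.norm := by
      rw [mul_inv_rev, ← norm_inv_eq (x := n)]
      apply gromovProduct_mul_right_eq_norm
      rw [← mul_inv_rev, norm_inv_eq, norm_inv_eq, norm_inv_eq, ← hmn, add_comm]
    have := min_gromovProduct_le n⁻¹ (m * n)⁻¹ x
    lia
  refine ⟨n, ?_⟩
  rw [show n * (x * (m * n)) * n⁻¹ = n * x * m by group,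
    show n * (m * n) * n⁻¹ = n * m by group]
  have := norm_mul_mul_add_norm_add_norm_le hm_prefix hn_prefix (by lia)
  have := FreeGroup.norm_mul_le n m
  lia

end GromovProduct

section Letter

variable {ι G : Type*} [Group G]

/-- The value `f i` or `(f i)⁻¹` at a letter `(i, b)` of a word in the family `f`, with the
convention of `FreeGroup` that `b = true` is the positive exponent. -/
def letter (f : ι → G) (x : ι × Bool) : G := lift f (mk [x])

theorem letter_not (f : ι → G) (x : ι × Bool) : letter f (x.1, !x.2) = (letter f x)⁻¹ := by
  rw [letter, letter, ← map_inv, inv_mk]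
  rfl

theorem letter_eq_or_eq_inv (f : ι → G) (x : ι × Bool) :
    letter f x = f x.1 ∨ letter f x = (f x.1)⁻¹ := by
  obtain ⟨i, - | -⟩ := x <;> simp [letter]

theorem lift_mk_cons (f : ι → G) (x : ι × Bool) (L : List (ι × Bool)) :
    lift f (mk (x :: L)) = letter f x * lift f (mk L) := by
  rw [letter, ← map_mul, mul_mk, List.singleton_append]

theorem commute_letter_letter (f : ι → G) {x y : ι × Bool} (hxy : x.1 = y.1) :
    Commute (letter f x) (letter f y) := by
  rcases letter_eq_or_eq_inv f x with hx | hx <;> rcases letter_eq_or_eq_inv f y with hy | hy <;>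
    simp [hx, hy, hxy]

theorem commute_of_closure_pair_eq_top {u v : G} (huv : Subgroup.closure {u, v} = ⊤)
    (hcomm : Commute u v) (x y : G) : Commute x y := by
  have hgen : ∀ a ∈ ({u, v} : Set G), ∀ b ∈ ({u, v} : Set G), a * b = b * a := by
    rintro a (rfl | rfl) b (rfl | rfl)
    exacts [rfl, hcomm.eq, hcomm.eq.symm, rfl]
  have := Subgroup.isMulCommutative_closure hgen
  rw [huv] at this
  exact setLike_mul_comm (Subgroup.mem_top x) (Subgroup.mem_top y)

end Letter

section Cancellation

variable {α ι : Type*} [DecidableEq α] {f : ι → FreeGroup α}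

/-- In a reduced word in the family `f`, no letter is completely cancelled by its two neighbours.
This is the last of the three conditions in the definition of a Nielsen reduced family. -/
def LettersSurvive (f : ι → FreeGroup α) : Prop :=
  ∀ x y z, IsReduced [x, y, z] →
    gromovProduct (letter f x)⁻¹ (letter f y) + gromovProduct (letter f y)⁻¹ (letter f z) <
      (letter f y).norm

/- Induction on `L`: the first inequality shows that the cancellation between `x` and the word
after it is that between `x` and the next letter. -/
theorem LettersSurvive.gromovProduct_lt_and_length_add_le (hf : LettersSurvive f)
    {x y : ι × Bool} {L : List (ι × Bool)} (hL : IsReduced (x :: y :: L)) :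
    gromovProduct (letter f x)⁻¹ (letter f y) <
        gromovProduct (letter f y) (lift f (mk (y :: L))) ∧
      (y :: L).length + gromovProduct (letter f x)⁻¹ (letter f y) ≤
        (lift f (mk (y :: L))).norm := by
  induction L generalizing x y with
  | nil =>
    have hxyy : IsReduced [x, y, y] := by
      simpa [isReduced_cons_cons] using hL
    have := hf x y y hxyy
    rw [← letter, gromovProduct_self]
    simp only [List.length_singleton]
    lia
  | cons z L ih =>
    obtain ⟨hlt, hle⟩ := ih hL.tail
    have hsurvive := hf x y z (hL.infix ⟨[], L, rfl⟩)
    rw [lift_mk_cons f y]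
    set Y := letter f y
    set Z := letter f z
    set w := lift f (mk (z :: L))
    have hcancel : gromovProduct Y⁻¹ w = gromovProduct Y⁻¹ Z := by
      have h₁ := min_gromovProduct_le Y⁻¹ Z w
      have h₂ := min_gromovProduct_le Y⁻¹ w Z
      rw [gromovProduct_comm w] at h₂
      lia
    have := gromovProduct_mul_right_add Y w
    have := norm_mul_add_two_mul_gromovProduct Y w
    simp only [List.length_cons] at hle ⊢
    lia

theorem LettersSurvive.norm_le_norm_lift [DecidableEq ι] (hf : LettersSurvive f)
    (w : FreeGroup ι) : w.norm ≤ (lift f w).norm := by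
  rcases hw : w.toWord with - | ⟨x, L⟩
  · simp [FreeGroup.norm, hw]
  · have hred : IsReduced (x :: x :: L) :=
      isReduced_cons_cons.2 ⟨fun _ ↦ rfl, hw ▸ isReduced_toWord⟩
    have := (hf.gromovProduct_lt_and_length_add_le hred).2
    rw [← hw, mk_toWord] at this
    exact (Nat.le_add_right _ _).trans this

theorem LettersSurvive.exists_letter_eq_of (hf : LettersSurvive f)
    (hgen : Subgroup.closure (Set.range f) = ⊤) (a : α) : ∃ x, letter f x = of a := by
  classical
  obtain ⟨w, hw⟩ := lift_surjective_iff_closure_range_eq_top.2 hgen (of a)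
  have hle : w.norm ≤ 1 := (hf.norm_le_norm_lift w).trans_eq (by rw [hw, norm_of])
  have hne : w.norm ≠ 0 := by
    rw [Ne, FreeGroup.norm_eq_zero]
    rintro rfl
    simp at hw
  obtain ⟨x, hx⟩ := List.length_eq_one_iff.1 (show w.toWord.length = 1 by
    unfold FreeGroup.norm at *; lia)
  exact ⟨x, by rw [letter, ← hx, mk_toWord, hw]⟩

end Cancellation

section Moves

variable {G : Type*} [Group G]

/-- An elementary Nielsen move on a pair of elements, or a simultaneous conjugation. -/
inductive Move : G × G → G × G → Prop
  | swap (u v : G) : Move (u, v) (v, u)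
  | inv (u v : G) : Move (u, v) (u⁻¹, v)
  | mul (u v : G) : Move (u, v) (u * v, v)
  | conj (g u v : G) : Move (u, v) (g * u * g⁻¹, g * v * g⁻¹)

theorem Move.closure_eq_top {p q : G × G} (h : Move p q)
    (hp : Subgroup.closure {p.1, p.2} = ⊤) : Subgroup.closure {q.1, q.2} = ⊤ := by
  have hle {u v : G} {H : Subgroup G} (huv : Subgroup.closure {u, v} = ⊤) (hu : u ∈ H)
      (hv : v ∈ H) : H = ⊤ := by
    rw [eq_top_iff, ← huv, Subgroup.closure_le]
    exact Set.pair_subset hu hv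
  have hmem (u v : G) : u ∈ Subgroup.closure {u, v} ∧ v ∈ Subgroup.closure {u, v} :=
    ⟨Subgroup.subset_closure (by simp), Subgroup.subset_closure (by simp)⟩
  cases h with
  | swap u v => exact hle hp (hmem v u).2 (hmem v u).1
  | inv u v => exact hle hp (inv_mem_iff.1 (hmem u⁻¹ v).1) (hmem u⁻¹ v).2
  | mul u v =>
    exact hle hp ((mul_mem_cancel_right (hmem (u * v) v).2).1 (hmem (u * v) v).1)
      (hmem (u * v) v).2
  | conj g u v =>
    have hmap := congrArg (Subgroup.map (MulAut.conj g).toMonoidHom) hp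
    rw [MonoidHom.map_closure, Set.image_pair,
      Subgroup.map_top_of_surjective _ (MulAut.conj g).surjective] at hmap
    exact hmap

theorem Move.isConj_commutator {p q : G × G} (h : Move p q) :
    IsConj ⁅q.1, q.2⁆ ⁅p.1, p.2⁆ ∨ IsConj ⁅q.1, q.2⁆ ⁅p.1, p.2⁆⁻¹ := by
  simp only [isConj_iff]
  cases h with
  | swap u v => exact .inr ⟨1, by simp only [commutatorElement_def]; group⟩
  | inv u v => exact .inr ⟨u, by simp only [commutatorElement_def]; group⟩
  | mul u v => exact .inl ⟨1, by simp only [commutatorElement_def]; group⟩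
  | conj g u v => exact .inl ⟨g⁻¹, by simp only [commutatorElement_def]; group⟩

/-- Reachability by finitely many moves. -/
abbrev Reaches : G × G → G × G → Prop := ReflTransGen Move

theorem Reaches.closure_eq_top {p q : G × G} (h : Reaches p q)
    (hp : Subgroup.closure {p.1, p.2} = ⊤) : Subgroup.closure {q.1, q.2} = ⊤ := by
  induction h with
  | refl => exact hp
  | tail _ hmove ih => exact hmove.closure_eq_top ih

theorem isConj_inv_inv {x y : G} (h : IsConj x y) : IsConj x⁻¹ y⁻¹ := by
  obtain ⟨g, rfl⟩ := isConj_iff.1 h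
  exact isConj_iff.2 ⟨g, by group⟩

theorem Reaches.isConj_commutator {p q : G × G} (h : Reaches p q) :
    IsConj ⁅q.1, q.2⁆ ⁅p.1, p.2⁆ ∨ IsConj ⁅q.1, q.2⁆ ⁅p.1, p.2⁆⁻¹ := by
  induction h with
  | refl => exact .inl (.refl _)
  | tail _ hmove ih =>
    rcases hmove.isConj_commutator with hm | hm <;> rcases ih with hi | hi
    · exact .inl (hm.trans hi)
    · exact .inr (hm.trans hi)
    · exact .inr (hm.trans (isConj_inv_inv hi))
    · exact .inl (hm.trans (by simpa using isConj_inv_inv hi))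

theorem reaches_letter_letter (u v : G) {x y : Fin 2 × Bool} (hxy : x.1 ≠ y.1) :
    Reaches (u, v) (letter ![u, v] x, letter ![u, v] y) := by
  have hswap (a b : G) : Reaches (a, b) (b, a) := .single (.swap a b)
  have hinv (a b : G) : Reaches (a, b) (a⁻¹, b) := .single (.inv a b)
  have hinv' (a b : G) : Reaches (a, b) (a, b⁻¹) :=
    ((hswap a b).trans (hinv b a)).trans (hswap b⁻¹ a)
  have hindex : Reaches (u, v) (![u, v] x.1, ![u, v] y.1) := by
    generalize x.1 = i, y.1 = j at hxy
    fin_cases i <;> fin_cases j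
    · exact absurd rfl hxy
    · exact .refl
    · exact hswap u v
    · exact absurd rfl hxy
  refine hindex.trans ?_
  rcases letter_eq_or_eq_inv ![u, v] x with hx | hx <;>
    rcases letter_eq_or_eq_inv ![u, v] y with hy | hy <;> rw [hx, hy]
  · exact hinv' _ _
  · exact hinv _ _
  · exact (hinv _ _).trans (hinv' _ _)

end Moves

section Minimal

variable {α : Type*} [DecidableEq α]

/-- The total length of a pair, which Nielsen reduction minimises. -/
def totalNorm (p : FreeGroup α × FreeGroup α) : ℕ := p.1.norm + p.2.norm

/-- A pair is minimal if no sequence of moves makes it shorter. -/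
def IsMinimal (p : FreeGroup α × FreeGroup α) : Prop :=
  ∀ q, Reaches p q → totalNorm p ≤ totalNorm q

theorem exists_reaches_isMinimal (p : FreeGroup α × FreeGroup α) :
    ∃ q, Reaches p q ∧ IsMinimal q := by
  obtain ⟨q, hpq, hmin⟩ :=
    exists_minimalFor_of_wellFoundedLT (Reaches p) totalNorm ⟨p, .refl⟩
  exact ⟨q, hpq, fun r hqr ↦ (le_total _ _).elim id (hmin (hpq.trans hqr))⟩

theorem IsMinimal.of_reaches {p q : FreeGroup α × FreeGroup α} (hp : IsMinimal p)
    (hpq : Reaches p q) (hle : totalNorm q ≤ totalNorm p) : IsMinimal q :=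
  fun r hqr ↦ hle.trans (hp r (hpq.trans hqr))

theorem IsMinimal.two_mul_gromovProduct_le {x y : FreeGroup α} (h : IsMinimal (x, y)) :
    2 * gromovProduct x⁻¹ y ≤ y.norm := by
  have hmul : x.norm + y.norm ≤ (x * y).norm + y.norm := h _ (.single (.mul x y))
  have := norm_mul_add_two_mul_gromovProduct x y
  lia

theorem norm_letter {ι : Type*} (f : ι → FreeGroup α) (x : ι × Bool) :
    (letter f x).norm = (f x.1).norm := by
  rcases letter_eq_or_eq_inv f x with hx | hx <;> simp [hx]

theorem IsMinimal.letter_letter {u v : FreeGroup α} (h : IsMinimal (u, v))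
    {x y : Fin 2 × Bool} (hxy : x.1 ≠ y.1) :
    IsMinimal (letter ![u, v] x, letter ![u, v] y) := by
  refine h.of_reaches (reaches_letter_letter u v hxy) ?_
  simp only [totalNorm, norm_letter]
  generalize x.1 = i, y.1 = j at hxy
  fin_cases i <;> fin_cases j <;> simp_all [add_comm]

theorem IsMinimal.two_mul_gromovProduct_le_left {x y : FreeGroup α} (h : IsMinimal (x, y)) :
    2 * gromovProduct x⁻¹ y ≤ x.norm := by
  have hinv : IsMinimal (y⁻¹, x⁻¹) := by
    simpa [letter] using h.letter_letter (x := (1, false)) (y := (0, false)) one_ne_zero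
  simpa only [inv_inv, norm_inv_eq, gromovProduct_comm y] using hinv.two_mul_gromovProduct_le

/- If `x` cancelled all of `y`, half of it on each side, then conjugating `(x * y, y)` by a half of
`y` would lead to a pair of total length at most `x.norm`. -/
theorem IsMinimal.gromovProduct_add_gromovProduct_lt {x y : FreeGroup α}
    (hxy : IsMinimal (x, y)) (hy : y ≠ 1) :
    gromovProduct x⁻¹ y + gromovProduct y⁻¹ x < y.norm := by
  have hpos : y.norm ≠ 0 := by rwa [Ne, FreeGroup.norm_eq_zero]
  have hyx : IsMinimal (y, x) := by
    simpa [letter] using hxy.letter_letter (x := (1, true)) (y := (0, true)) one_ne_zero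
  by_contra! hle
  have hright := hxy.two_mul_gromovProduct_le
  have hleft := hyx.two_mul_gromovProduct_le_left
  have hle_norm := hxy.two_mul_gromovProduct_le_left
  obtain ⟨g, hg⟩ := exists_norm_conj_mul_add_norm_conj_le (x := x) (y := y)
    (k := gromovProduct x⁻¹ y) (by lia) le_rfl (by lia) hle_norm
  have hmin : x.norm + y.norm ≤ (g * (x * y) * g⁻¹).norm + (g * y * g⁻¹).norm :=
    hxy _ (.tail (.single (.mul x y)) (.conj g (x * y) y))
  lia

theorem IsMinimal.gromovProduct_add_gromovProduct_inv_lt {x y : FreeGroup α}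
    (hxy : IsMinimal (x, y)) (hy : y ≠ 1) :
    gromovProduct x⁻¹ y + gromovProduct y⁻¹ x⁻¹ < y.norm := by
  have hyx : IsMinimal (y, x⁻¹) := by
    simpa [letter] using hxy.letter_letter (x := (1, true)) (y := (0, false)) one_ne_zero
  have hright := hxy.two_mul_gromovProduct_le
  have hleft := hyx.two_mul_gromovProduct_le_left
  have hself := two_mul_gromovProduct_inv_self_lt hy
  have := min_gromovProduct_le y⁻¹ x⁻¹ y
  lia

theorem IsMinimal.lettersSurvive {u v : FreeGroup α} (h : IsMinimal (u, v)) (hu : u ≠ 1)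
    (hv : v ≠ 1) : LettersSurvive ![u, v] := by
  rintro x y z hred
  obtain ⟨hxy, hred⟩ := isReduced_cons_cons.1 hred
  have hyz := (isReduced_cons_cons.1 hred).1
  have hne (w : Fin 2 × Bool) : letter ![u, v] w ≠ 1 := by
    have hfin : ∀ i, ![u, v] i ≠ 1 := Fin.forall_fin_two.2 ⟨hu, hv⟩
    rw [Ne, ← FreeGroup.norm_eq_zero, norm_letter, FreeGroup.norm_eq_zero]
    exact hfin w.1
  have hself := two_mul_gromovProduct_inv_self_lt (hne y)
  by_cases hxy₁ : x.1 = y.1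
  · obtain rfl : x = y := Prod.ext hxy₁ (hxy hxy₁)
    by_cases hyz₁ : x.1 = z.1
    · obtain rfl : x = z := Prod.ext hyz₁ (hyz hyz₁)
      lia
    · have := (h.letter_letter hyz₁).two_mul_gromovProduct_le_left
      lia
  · have hminxy := h.letter_letter hxy₁
    have := hminxy.two_mul_gromovProduct_le
    by_cases hyz₁ : y.1 = z.1
    · obtain rfl : y = z := Prod.ext hyz₁ (hyz hyz₁)
      lia
    · have hxz₁ : z.1 = x.1 := by lia
      by_cases hxz₂ : z.2 = x.2
      · obtain rfl : z = x := Prod.ext hxz₁ hxz₂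
        exact hminxy.gromovProduct_add_gromovProduct_lt (hne y)
      · obtain rfl : z = (x.1, !x.2) := Prod.ext hxz₁ (Bool.eq_not.2 hxz₂)
        rw [letter_not]
        exact hminxy.gromovProduct_add_gromovProduct_inv_lt (hne y)

end Minimal

theorem not_commute_of_of {α : Type*} {a b : α} (hab : a ≠ b) :
    ¬Commute (of a) (of b) := by
  classical
  intro hcomm
  have hword := congrArg toWord hcomm.eq
  simp [of, mul_mk, toWord_mk, hab] at hword

theorem reaches_of_closure_eq_top {u v : FreeGroup (Fin 2)}
    (huv : Subgroup.closure {u, v} = ⊤) : Reaches (u, v) (of 0, of 1) := by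
  obtain ⟨⟨u', v'⟩, hreach, hmin⟩ := exists_reaches_isMinimal (u, v)
  have hgen : Subgroup.closure {u', v'} = ⊤ := hreach.closure_eq_top huv
  have hcomm : ¬Commute u' v' := fun h ↦
    not_commute_of_of zero_ne_one (commute_of_closure_pair_eq_top hgen h _ _)
  have hsurvive : LettersSurvive ![u', v'] :=
    hmin.lettersSurvive (by rintro rfl; exact hcomm (.one_left _))
      (by rintro rfl; exact hcomm (.one_right _))
  have hletter := hsurvive.exists_letter_eq_of (by simpa [Set.pair_comm] using hgen)
  obtain ⟨x, hx⟩ := hletter 0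
  obtain ⟨y, hy⟩ := hletter 1
  have hxy : x.1 ≠ y.1 := fun h ↦
    not_commute_of_of zero_ne_one (hx ▸ hy ▸ commute_letter_letter ![u', v'] h)
  rw [← hx, ← hy]
  exact hreach.trans (reaches_letter_letter u' v' hxy)

end Nielsen

/-- If `u, v` generate the free group on `a, b`, then `[u,v]` is conjugate to `[a,b]`
or to `[a,b]⁻¹`. -/
theorem stmt_14 (u v : FreeGroup (Fin 2))
    (huv : Subgroup.closure {u, v} = (⊤ : Subgroup (FreeGroup (Fin 2)))) :
    ∃ g : FreeGroup (Fin 2),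
      u * v * u⁻¹ * v⁻¹ =
          g * (FreeGroup.of 0 * FreeGroup.of 1 * (FreeGroup.of 0)⁻¹ *
            (FreeGroup.of 1)⁻¹) * g⁻¹ ∨
      u * v * u⁻¹ * v⁻¹ =
          g * (FreeGroup.of 0 * FreeGroup.of 1 * (FreeGroup.of 0)⁻¹ *
            (FreeGroup.of 1)⁻¹)⁻¹ * g⁻¹ := by
  have hreach := Nielsen.reaches_of_closure_eq_top huv
  rcases hreach.isConj_commutator with h | h
  · obtain ⟨g, hg⟩ := isConj_iff.1 h
    exact ⟨g, .inl hg.symm⟩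
  · obtain ⟨g, hg⟩ := isConj_iff.1 (Nielsen.isConj_inv_inv h)
    exact ⟨g, .inr (hg.trans (inv_inv _)).symm⟩
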